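/- Let K and L be real symmetric positive definite d×d matrices, κ_1 ≥ … ≥ κ_d the eigenvalues of K and λ̄_1 ≤ … ≤ λ̄_d the eigenvalues of L in increasing order. Then det(K + L) ≤ ∏_{i=1}^d (κ_i + λ̄_i). -/

import Mathlib

open Matrix in
theorem aux_deriv {n : ℕ} (A E F : Matrix (Fin n) (Fin n) ℝ) (hA : A.det ≠ 0) :
    HasDerivAt (fun t : ℝ => (A + t • E + (t ^ 2) • F).det) (A.det * (A⁻¹ * E).trace) 0 := by
  have hd : Differentiable ℝ (fun p : ℝ × ℝ => (A + p.1 • E + p.2 • F).det) := by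
    simp only [Matrix.det_apply, Matrix.add_apply, Matrix.smul_apply, smul_eq_mul]
    fun_prop
  have h0 := (hd (0, 0)).hasFDerivAt
  have c1 : HasDerivAt (fun t : ℝ => ((t, t ^ 2) : ℝ × ℝ)) (1, 0) 0 := by
    have := (hasDerivAt_id (0 : ℝ)).prodMk ((hasDerivAt_id (0 : ℝ)).pow 2)
    simpa using this
  have c2 : HasDerivAt (fun t : ℝ => ((t, 0) : ℝ × ℝ)) (1, 0) 0 :=
    (hasDerivAt_id (0 : ℝ)).prodMk (hasDerivAt_const (0 : ℝ) (0 : ℝ))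
  have d1 := HasFDerivAt.comp_hasDerivAt_of_eq (0 : ℝ) h0 c1 (by simp)
  have d2 := HasFDerivAt.comp_hasDerivAt_of_eq (0 : ℝ) h0 c2 (by simp)
  have d3 : HasDerivAt (fun t : ℝ => (A + t • E).det) (A.det * (A⁻¹ * E).trace) 0 := by
    have hu : IsUnit A.det := isUnit_iff_ne_zero.mpr hA
    have e : (fun t : ℝ => (A + t • E).det) = fun t : ℝ => A.det * (1 + (A⁻¹ * E).trace * t +
        (det (1 + (Polynomial.X : Polynomial ℝ) • (A⁻¹ * E).map Polynomial.C)).divX.divX.eval t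
          * t ^ 2) := by
      funext t
      rw [← Matrix.det_one_add_smul, ← Matrix.det_mul, Matrix.mul_add, Matrix.mul_smul,
        ← Matrix.mul_assoc, Matrix.mul_nonsing_inv _ hu, Matrix.mul_one, Matrix.one_mul]
    rw [e]
    generalize (det (1 + (Polynomial.X : Polynomial ℝ) • (A⁻¹ * E).map Polynomial.C)).divX.divX = p
    have := (((hasDerivAt_id (0 : ℝ)).const_mul (A⁻¹ * E).trace).const_add 1).add
      ((p.hasDerivAt (0 : ℝ)).mul ((hasDerivAt_id (0 : ℝ)).pow 2))
    have := this.const_mul A.det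
    convert! this using 1
    simp
  have d2' : HasDerivAt (fun t : ℝ => (A + t • E).det)
      ((fderiv ℝ (fun p : ℝ × ℝ => (A + p.1 • E + p.2 • F).det) (0, 0)) (1, 0)) 0 := by
    convert! d2 using 1
    funext t
    simp
  rw [d3.unique d2']
  exact d1

open Matrix in
theorem aux_crit {n : ℕ} (K L X : Matrix (Fin n) (Fin n) ℝ) (hX : Xᵀ = -X)
    (hA : (K + L).det ≠ 0)
    (hmax : ∀ U : Matrix (Fin n) (Fin n) ℝ, U * Uᵀ = 1 → (K + U * L * Uᵀ).det ≤ (K + L).det) :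
    ((K + L)⁻¹ * (X * L - L * X)).trace = 0 := by
  set E := K * X - X * K + X * L - L * X with hE
  set F := -(X * K * X) - X * L * X with hF
  have key : ∀ t : ℝ, (K + L + t • E + (t ^ 2) • F).det ≤
      (K + L).det * (1 + t • (0 : Matrix (Fin n) (Fin n) ℝ) + (t ^ 2) • (Xᵀ * X)).det := by
    intro t
    set N := 1 - t • X with hN
    set P := 1 + t • X with hP
    have hNP : N * P = 1 + t • (0 : Matrix (Fin n) (Fin n) ℝ) + (t ^ 2) • (Xᵀ * X) := by
      rw [hN, hP, hX]
      simp [sub_mul, mul_add, pow_two, smul_smul, smul_add, smul_sub]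
      abel
    have hPN : P * N = N * P := by
      rw [hN, hP]; simp [sub_mul, mul_add, mul_sub, add_mul, smul_add, smul_sub]
      abel
    have hpos : 0 < (N * P).det := by
      rw [hNP, smul_zero, add_zero]
      apply Matrix.PosDef.det_pos
      apply Matrix.PosDef.one.add_posSemidef
      have := (Matrix.posSemidef_conjTranspose_mul_self X).smul (sq_nonneg t)
      simpa using this
    rw [← hNP]
    have hdet := Matrix.det_mul N P
    have hn : IsUnit N.det := isUnit_iff_ne_zero.mpr (fun h => by rw [hdet, h] at hpos; simp at hpos)
    have hp : IsUnit P.det := isUnit_iff_ne_zero.mpr (fun h => by rw [hdet, h] at hpos; simp at hpos)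
    have hNt : Nᵀ = P := by rw [hN, hP]; simp [hX]
    have hPt : Pᵀ = N := by rw [← hNt]; simp
    have hUt : (N⁻¹ * P)ᵀ = N * P⁻¹ := by
      rw [Matrix.transpose_mul, Matrix.transpose_nonsing_inv, hNt, hPt]
    have hU : (N⁻¹ * P) * (N⁻¹ * P)ᵀ = 1 := by
      rw [hUt]
      calc N⁻¹ * P * (N * P⁻¹) = N⁻¹ * (P * N) * P⁻¹ := by simp only [Matrix.mul_assoc]
        _ = (N⁻¹ * N) * (P * P⁻¹) := by rw [hPN]; simp only [Matrix.mul_assoc]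
        _ = 1 := by rw [Matrix.nonsing_inv_mul _ hn, Matrix.mul_nonsing_inv _ hp, Matrix.one_mul]
    have hm := hmax _ hU
    rw [hUt] at hm
    have e1 : N * (K + N⁻¹ * P * L * (N * P⁻¹)) * P = K + L + t • E + (t ^ 2) • F := by
      have : N * (K + N⁻¹ * P * L * (N * P⁻¹)) * P
          = N * K * P + (N * N⁻¹) * P * L * N * (P⁻¹ * P) := by
        simp only [Matrix.mul_add, Matrix.add_mul, Matrix.mul_assoc]
      rw [this, Matrix.nonsing_inv_mul _ hp, Matrix.mul_nonsing_inv _ hn, hN, hP, hE, hF]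
      simp [sub_mul, mul_add, mul_sub, add_mul, pow_two, smul_smul, smul_sub, smul_add,
        Matrix.mul_assoc]
      abel
    rw [← e1, Matrix.det_mul, Matrix.det_mul]
    have := mul_le_mul_of_nonneg_left hm hpos.le
    rw [hdet] at this ⊢
    linarith
  have dl := aux_deriv (K + L) E F hA
  have dr := (aux_deriv 1 0 (Xᵀ * X) (by simp)).const_mul (K + L).det
  have dd := dr.sub dl
  have hmin : IsLocalMin (fun t : ℝ => (K + L).det * (1 + t • (0 : Matrix (Fin n) (Fin n) ℝ) +
      (t ^ 2) • (Xᵀ * X)).det - (K + L + t • E + (t ^ 2) • F).det) 0 := by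
    apply Filter.Eventually.of_forall
    intro t
    have := key t
    simp only [zero_smul, add_zero, ne_eq, OfNat.ofNat_ne_zero, not_false_eq_true, zero_pow,
      Matrix.det_one, mul_one, sub_self]
    linarith
  have hz := hmin.hasDerivAt_eq_zero dd
  have hz2 : ((K + L)⁻¹ * E).trace = 0 := by
    simp only [Matrix.mul_zero, Matrix.trace_zero, mul_zero, zero_sub, neg_eq_zero] at hz
    exact (mul_eq_zero.mp hz).resolve_left hA
  have hu : IsUnit (K + L).det := isUnit_iff_ne_zero.mpr hA
  have e2 : E = (K + L) * X - X * (K + L) + (2 : ℝ) • (X * L - L * X) := by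
    rw [hE, two_smul]; noncomm_ring
  rw [e2, Matrix.mul_add, Matrix.mul_sub, ← Matrix.mul_assoc, Matrix.nonsing_inv_mul _ hu,
    Matrix.trace_add, Matrix.trace_sub, Matrix.trace_mul_comm _ (X * (K + L)), Matrix.mul_assoc X,
    Matrix.mul_nonsing_inv _ hu, Matrix.mul_smul, Matrix.trace_smul] at hz2
  simpa using hz2

open Matrix in
theorem aux_comm {n : ℕ} (K L : Matrix (Fin n) (Fin n) ℝ) (hK : Kᵀ = K) (hL : Lᵀ = L)
    (hA : (K + L).det ≠ 0)
    (hmax : ∀ U : Matrix (Fin n) (Fin n) ℝ, U * Uᵀ = 1 → (K + U * L * Uᵀ).det ≤ (K + L).det) :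
    K * L = L * K := by
  have hu : IsUnit (K + L).det := isUnit_iff_ne_zero.mpr hA
  set B := (K + L)⁻¹ with hB
  have hBt : Bᵀ = B := by rw [hB, Matrix.transpose_nonsing_inv, Matrix.transpose_add, hK, hL]
  set Y := L * B - B * L with hY
  have hYt : Yᵀ = B * L - L * B := by
    rw [hY, Matrix.transpose_sub, Matrix.transpose_mul, Matrix.transpose_mul, hBt, hL]
  have hc := aux_crit K L Yᵀ (by rw [Matrix.transpose_transpose, hYt, hY]; abel) hA hmax
  have h0 : (Yᵀ * Y).trace = 0 := by
    rw [← hc, ← hB]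
    generalize Yᵀ = X
    rw [hY, Matrix.mul_sub, Matrix.mul_sub, Matrix.trace_sub, Matrix.trace_sub,
      ← Matrix.mul_assoc X L B, Matrix.trace_mul_comm (X * L) B, Matrix.trace_mul_comm X (B * L),
      Matrix.mul_assoc B L X]
  have hY0 : Y = 0 := by
    rw [← Matrix.conjTranspose_eq_transpose_of_trivial] at h0
    exact Matrix.trace_conjTranspose_mul_self_eq_zero_iff.mp h0
  have hcm : L * B = B * L := sub_eq_zero.mp hY0
  have h2 : (K + L) * (L * B) * (K + L) = (K + L) * (B * L) * (K + L) := by rw [hcm]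
  have h3 : (K + L) * L = L * (K + L) := by
    calc (K + L) * L = (K + L) * L * (B * (K + L)) := by
          rw [hB, Matrix.nonsing_inv_mul _ hu, Matrix.mul_one]
      _ = (K + L) * (L * B) * (K + L) := by simp only [Matrix.mul_assoc]
      _ = ((K + L) * B) * L * (K + L) := by rw [h2]; simp only [Matrix.mul_assoc]
      _ = L * (K + L) := by rw [hB, Matrix.mul_nonsing_inv _ hu, Matrix.one_mul]
  rw [Matrix.add_mul, Matrix.mul_add] at h3
  exact add_right_cancel h3

open Matrix in
theorem aux_compact (n : ℕ) : IsCompact {U : Matrix (Fin n) (Fin n) ℝ | U * Uᵀ = 1} := by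
  have hc : IsCompact (Set.pi Set.univ (fun _ : Fin n => Set.pi Set.univ
      (fun _ : Fin n => Set.Icc (-1 : ℝ) 1))) :=
    isCompact_univ_pi fun _ => isCompact_univ_pi fun _ => isCompact_Icc
  refine IsCompact.of_isClosed_subset hc ?_ ?_
  · exact isClosed_eq (by fun_prop) continuous_const
  · intro U hU i _ j _
    have h := congrFun (congrFun hU i) i
    simp only [Matrix.mul_apply, Matrix.transpose_apply, Matrix.one_apply_eq] at h
    have : U i j * U i j ≤ 1 := by
      rw [← h]
      exact Finset.single_le_sum (f := fun j => U i j * U i j)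
        (fun k _ => mul_self_nonneg _) (Finset.mem_univ j)
    exact abs_le.mp (abs_le_one_iff_mul_self_le_one.mpr this)

open Matrix in
theorem aux_strict {n : ℕ} (κ lam : Fin n → ℝ) (hκ : StrictAnti κ) (hlam : Monotone lam)
    (hκ0 : ∀ i, 0 < κ i) (hl0 : ∀ i, 0 < lam i) (W : Matrix (Fin n) (Fin n) ℝ) (hW : W * Wᵀ = 1) :
    (diagonal κ + W * diagonal lam * Wᵀ).det ≤ ∏ i, (κ i + lam i) := by
  obtain ⟨V, hV, hmax⟩ := (aux_compact n).exists_isMaxOn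
    (f := fun U => (diagonal κ + U * diagonal lam * Uᵀ).det) ⟨W, hW⟩
    (Continuous.continuousOn (by fun_prop))
  refine (hmax hW).trans ?_
  have hV' : V * Vᵀ = 1 := hV
  have hV2 : Vᵀ * V = 1 := mul_eq_one_comm.mp hV'
  set M := V * diagonal lam * Vᵀ with hM
  have hmax2 : ∀ U : Matrix (Fin n) (Fin n) ℝ, U * Uᵀ = 1 →
      (diagonal κ + U * M * Uᵀ).det ≤ (diagonal κ + M).det := by
    intro U hU
    have h1 : (U * V) * (U * V)ᵀ = 1 := by
      rw [Matrix.transpose_mul]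
      calc U * V * (Vᵀ * Uᵀ) = U * (V * Vᵀ) * Uᵀ := by simp only [Matrix.mul_assoc]
        _ = 1 := by rw [hV', Matrix.mul_one, hU]
    have h2 := hmax h1
    simp only [Set.mem_ofPred_eq] at h2
    convert! h2 using 2
    rw [hM, Matrix.transpose_mul]
    simp only [Matrix.mul_assoc]
  have hMt : Mᵀ = M := by
    rw [hM]; simp [Matrix.transpose_mul, Matrix.mul_assoc]
  have hpd : (diagonal κ + M).PosDef := by
    apply Matrix.PosDef.add_posSemidef
    · exact Matrix.PosDef.diagonal hκ0
    · have := (Matrix.PosSemidef.diagonal (fun i => (hl0 i).le)).mul_mul_conjTranspose_same V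
      simpa [hM] using this
  have hcomm := aux_comm (diagonal κ) M (by simp) hMt hpd.det_pos.ne' hmax2
  have hoff : ∀ i j, i ≠ j → M i j = 0 := by
    intro i j hij
    have h := congrFun (congrFun hcomm i) j
    rw [Matrix.diagonal_mul, Matrix.mul_diagonal] at h
    have hne : κ i - κ j ≠ 0 := sub_ne_zero.mpr (fun h => hij (hκ.injective h))
    have : (κ i - κ j) * M i j = 0 := by linarith
    exact (mul_eq_zero.mp this).resolve_left hne
  obtain ⟨l, hl⟩ : ∃ l, M = diagonal l := ⟨fun i => M i i, by
    ext i j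
    by_cases h : i = j
    · subst h; simp
    · rw [hoff i j h, Matrix.diagonal_apply_ne _ h]⟩
  have hroots : Multiset.map l Finset.univ.val = Multiset.map lam Finset.univ.val := by
    have h1 : M.charpoly = (diagonal lam).charpoly := by
      rw [hM, Matrix.charpoly_mul_comm, ← Matrix.mul_assoc, hV2, Matrix.one_mul]
    rw [hl, Matrix.charpoly_diagonal, Matrix.charpoly_diagonal] at h1
    have h2 := congrArg Polynomial.roots h1
    have h3 : ∀ f : Fin n → ℝ, (∏ i, (Polynomial.X - Polynomial.C (f i))).roots =
        Multiset.map f Finset.univ.val := by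
      intro f
      have := Polynomial.roots_multiset_prod_X_sub_C (Multiset.map f Finset.univ.val)
      rw [Multiset.map_map] at this
      exact this
    rwa [h3, h3] at h2
  have hlpos : ∀ i, 0 < l i := by
    intro i
    have : l i ∈ Multiset.map lam Finset.univ.val := by
      rw [← hroots]; exact Multiset.mem_map_of_mem _ (Finset.mem_univ i)
    obtain ⟨j, _, hj⟩ := Multiset.mem_map.mp this
    rw [← hj]; exact hl0 j
  have hlmono : Monotone l := by
    intro i j hij
    rcases hij.eq_or_lt with rfl | hij
    · exact le_rfl
    by_contra! hlt
    have hm := hmax2 ((Equiv.swap i j).permMatrix ℝ) (by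
      rw [Matrix.transpose_permMatrix, ← Matrix.permMatrix_mul]; simp)
    have hs : (Equiv.swap i j).permMatrix ℝ * M * ((Equiv.swap i j).permMatrix ℝ)ᵀ
        = diagonal (l ∘ Equiv.swap i j) := by
      rw [Matrix.transpose_permMatrix, hl, Equiv.Perm.permMatrix, Equiv.Perm.permMatrix,
        PEquiv.toMatrix_toPEquiv_mul, PEquiv.mul_toMatrix_toPEquiv]
      ext a b
      simp [Matrix.diagonal_apply]
    rw [hs, hl, Matrix.diagonal_add, Matrix.diagonal_add, Matrix.det_diagonal,
      Matrix.det_diagonal] at hm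
    have hne : i ≠ j := hij.ne
    have hji : j ∈ Finset.univ.erase i := by simp [hne.symm]
    rw [← Finset.mul_prod_erase _ _ (Finset.mem_univ i), ← Finset.mul_prod_erase _ _ hji,
      ← Finset.mul_prod_erase _ _ (Finset.mem_univ i), ← Finset.mul_prod_erase _ _ hji] at hm
    have hrest : ∏ x ∈ (Finset.univ.erase i).erase j, (κ x + (l ∘ Equiv.swap i j) x) =
        ∏ x ∈ (Finset.univ.erase i).erase j, (κ x + l x) := by
      apply Finset.prod_congr rfl
      intro x hx
      simp only [Finset.mem_erase, Finset.mem_univ, and_true] at hx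
      simp [Equiv.swap_apply_of_ne_of_ne hx.2 hx.1]
    have hpos : 0 < ∏ x ∈ (Finset.univ.erase i).erase j, (κ x + l x) :=
      Finset.prod_pos fun x _ => add_pos (hκ0 x) (hlpos x)
    rw [hrest, ← mul_assoc, ← mul_assoc] at hm
    have hm2 := le_of_mul_le_mul_right hm hpos
    simp only [Function.comp_apply, Equiv.swap_apply_left, Equiv.swap_apply_right] at hm2
    have hk := hκ hij
    nlinarith [mul_pos (sub_pos.mpr hk) (sub_pos.mpr hlt)]
  have heq : l = lam := by
    apply List.ofFn_injective
    refine List.Perm.eq_of_sortedLE hlmono.sortedLE_ofFn hlam.sortedLE_ofFn ?_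
    rw [← Multiset.coe_eq_coe]
    simpa [Fin.univ_val_map] using hroots
  change (diagonal κ + M).det ≤ _
  rw [hl, heq, Matrix.diagonal_add, Matrix.det_diagonal]

open Matrix in
theorem aux_weak {n : ℕ} (κ lam : Fin n → ℝ) (hκ : Antitone κ) (hlam : Monotone lam)
    (hκ0 : ∀ i, 0 < κ i) (hl0 : ∀ i, 0 < lam i) (W : Matrix (Fin n) (Fin n) ℝ) (hW : W * Wᵀ = 1) :
    (diagonal κ + W * diagonal lam * Wᵀ).det ≤ ∏ i, (κ i + lam i) := by
  let k : ℝ → Fin n → ℝ := fun ε i => κ i + ε * ((n : ℝ) - (i : ℕ))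
  have hk : Continuous k := by fun_prop
  have hk0 : k 0 = κ := by funext i; simp [k]
  have h1 : Continuous fun ε => (diagonal (k ε) + W * diagonal lam * Wᵀ).det := by fun_prop
  have h2 : Continuous fun ε => ∏ i, (k ε i + lam i) := by fun_prop
  have t1 := (h1.tendsto 0).mono_left (nhdsWithin_le_nhds (s := Set.Ioi (0 : ℝ)))
  have t2 := (h2.tendsto 0).mono_left (nhdsWithin_le_nhds (s := Set.Ioi (0 : ℝ)))
  have := le_of_tendsto_of_tendsto t1 t2 (by
    filter_upwards [self_mem_nhdsWithin] with ε hε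
    have hε' : 0 < ε := hε
    apply aux_strict _ _ _ hlam _ hl0 W hW
    · intro i j hij
      have a := hκ hij.le
      have b : ((i : ℕ) : ℝ) < ((j : ℕ) : ℝ) := by exact_mod_cast hij
      simp only [k]
      nlinarith
    · intro i
      have b : ((i : ℕ) : ℝ) < n := by exact_mod_cast i.2
      have := hκ0 i
      have := mul_pos hε' (sub_pos.mpr b)
      simp only [k]
      linarith)
  simpa only [hk0] using this

open Matrix in
theorem aux_spec {n : ℕ} (K : Matrix (Fin n) (Fin n) ℝ) (hK : K.IsHermitian) (κ : Fin n → ℝ)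
    (h : ∃ e : Equiv.Perm (Fin n), κ = hK.eigenvalues ∘ e) :
    ∃ U : Matrix (Fin n) (Fin n) ℝ, U * Uᵀ = 1 ∧ K = U * diagonal κ * Uᵀ := by
  obtain ⟨e, rfl⟩ := h
  set V : Matrix (Fin n) (Fin n) ℝ := (hK.eigenvectorUnitary : Matrix (Fin n) (Fin n) ℝ) with hV
  have hVV : V * Vᵀ = 1 := by
    have := Unitary.coe_mul_star_self hK.eigenvectorUnitary
    simpa [Matrix.star_eq_conjTranspose] using this
  have hs : K = V * diagonal hK.eigenvalues * Vᵀ := by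
    have := hK.spectral_theorem
    rw [Unitary.conjStarAlgAut_apply] at this
    simpa [Matrix.star_eq_conjTranspose, Function.comp_def] using this
  have hP : (e.permMatrix ℝ)ᵀ * (e.permMatrix ℝ) = 1 := by
    rw [Matrix.transpose_permMatrix, ← Matrix.permMatrix_mul]; simp
  have hd : diagonal (hK.eigenvalues ∘ e) =
      e.permMatrix ℝ * diagonal hK.eigenvalues * (e.permMatrix ℝ)ᵀ := by
    rw [Matrix.transpose_permMatrix, Equiv.Perm.permMatrix, Equiv.Perm.permMatrix,
        PEquiv.toMatrix_toPEquiv_mul, PEquiv.mul_toMatrix_toPEquiv]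
    ext a b
    have hee : (Equiv.symm e⁻¹) b = e b := rfl
    simp [Matrix.diagonal_apply, hee]
  refine ⟨V * (e.permMatrix ℝ)ᵀ, ?_, ?_⟩
  · rw [Matrix.transpose_mul, Matrix.transpose_transpose]
    calc V * (e.permMatrix ℝ)ᵀ * (e.permMatrix ℝ * Vᵀ)
        = V * ((e.permMatrix ℝ)ᵀ * e.permMatrix ℝ) * Vᵀ := by simp only [Matrix.mul_assoc]
      _ = 1 := by rw [hP, Matrix.mul_one, hVV]
  · rw [hd, Matrix.transpose_mul, Matrix.transpose_transpose]
    set P := e.permMatrix ℝ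
    calc K = V * diagonal hK.eigenvalues * Vᵀ := hs
      _ = V * (Pᵀ * P) * diagonal hK.eigenvalues * (Pᵀ * P) * Vᵀ := by
        rw [hP, Matrix.mul_one, Matrix.mul_one]
      _ = _ := by simp only [Matrix.mul_assoc]

theorem stmt_8 (d : ℕ) (K L : Matrix (Fin d) (Fin d) ℝ)
    (hK : K.PosDef) (hL : L.PosDef)
    (κ lam : Fin d → ℝ)
    (hκ : ∃ e : Equiv.Perm (Fin d), κ = hK.1.eigenvalues ∘ e) (hκdec : Antitone κ)
    (hlam : ∃ e : Equiv.Perm (Fin d), lam = hL.1.eigenvalues ∘ e) (hlaminc : Monotone lam) :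
    (K + L).det ≤ ∏ i, (κ i + lam i) := by
  obtain ⟨U, hU, hKU⟩ := aux_spec K hK.1 κ hκ
  obtain ⟨V, hV, hLV⟩ := aux_spec L hL.1 lam hlam
  have hκ0 : ∀ i, 0 < κ i := by
    obtain ⟨e, rfl⟩ := hκ
    exact fun i => hK.eigenvalues_pos _
  have hl0 : ∀ i, 0 < lam i := by
    obtain ⟨e, rfl⟩ := hlam
    exact fun i => hL.eigenvalues_pos _
  have hU2 : U.transpose * U = 1 := mul_eq_one_comm.mp hU
  have hW : (U.transpose * V) * (U.transpose * V).transpose = 1 := by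
    rw [Matrix.transpose_mul, Matrix.transpose_transpose]
    calc U.transpose * V * (V.transpose * U) = U.transpose * (V * V.transpose) * U := by
          simp only [Matrix.mul_assoc]
      _ = 1 := by rw [hV, Matrix.mul_one, hU2]
  have h := aux_weak κ lam hκdec hlaminc hκ0 hl0 _ hW
  refine le_trans (le_of_eq ?_) h
  have e : K + L = U * (Matrix.diagonal κ + U.transpose * V * Matrix.diagonal lam *
      (U.transpose * V).transpose) * U.transpose := by
    rw [Matrix.mul_add, Matrix.add_mul, ← hKU, Matrix.transpose_mul, Matrix.transpose_transpose]
    congr 1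
    calc L = V * Matrix.diagonal lam * V.transpose := hLV
      _ = (U * U.transpose) * V * Matrix.diagonal lam * V.transpose * (U * U.transpose) := by
        rw [hU, Matrix.one_mul, Matrix.mul_one]
      _ = _ := by simp only [Matrix.mul_assoc]
  rw [e, Matrix.det_mul_right_comm, hU, Matrix.one_mul]
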